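/- Let δ satisfy δ(j,a) = (a ∑_{i=0}^{j} 1/((a+2i)(a+1+2i)))/∏_{i=1}^{2j+1}(a+i). Then for j ≥ 2, δ(j+1, a) = ((1 + 4/c)·1/(a+2)² + 1/c)·δ(j, a+2) − (1/c)·(1/(a+4)²)·δ(j-1, a+4) + (1/c)·δ(j, a) − (1/c)·(1/(a+2)²)·δ(j-1, a+2) + (4/c)·(1/(a+2j+2)²)·δ(j, -a-2j-2), where c = (a+1)² + (a+2j+3)² + 6j + 6, as rational functions in a. -/

import Mathlib

open Finset

/-- `φ'(j, x) = ∑_{i=0}^{j} 1/((x + 2i)(x + 1 + 2i))`, as a rational function of `x`. -/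
noncomputable def phi' (j : ℕ) (x : RatFunc ℚ) : RatFunc ℚ :=
  ∑ i ∈ Finset.range (j + 1),
    1 / ((x + 2 * (i : RatFunc ℚ)) * (x + 1 + 2 * (i : RatFunc ℚ)))

/-- `δ(j, x) = (x · φ'(j, x)) / ∏_{i=1}^{2j+1}(x + i)`, as a rational function of `x`. -/
noncomputable def delta (j : ℕ) (x : RatFunc ℚ) : RatFunc ℚ :=
  x * phi' j x / ∏ i ∈ Finset.Icc 1 (2 * j + 1), (x + (i : RatFunc ℚ))

noncomputable def prodP (m : ℕ) (x : RatFunc ℚ) : RatFunc ℚ :=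
  ∏ i ∈ Finset.Icc 1 m, (x + (i : RatFunc ℚ))

lemma prodP_succ (m : ℕ) (x : RatFunc ℚ) :
    prodP (m + 1) x = prodP m x * (x + m + 1) := by
  unfold prodP
  rw [Finset.prod_Icc_succ_top (by omega)]
  push_cast
  ring

lemma prodP_succ_left (m : ℕ) (x : RatFunc ℚ) :
    prodP (m + 1) x = (x + 1) * prodP m (x + 1) := by
  induction m with
  | zero => simp [prodP]
  | succ m ih =>
    rw [prodP_succ, ih, prodP_succ m (x + 1)]
    push_cast
    ring

lemma prodP_refl (m : ℕ) (x : RatFunc ℚ) :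
    prodP m (-x - m - 1) = (-1) ^ m * prodP m x := by
  induction m generalizing x with
  | zero => simp [prodP]
  | succ m ih =>
    rw [prodP_succ_left, prodP_succ m x]
    have : (-x - ((m + 1 : ℕ) : RatFunc ℚ) - 1 + 1) = -x - m - 1 := by push_cast; ring
    rw [this, ih]
    ring

lemma phi'_succ (j : ℕ) (x : RatFunc ℚ) :
    phi' (j + 1) x = phi' j x + 1 / ((x + 2 * (j + 1)) * (x + 1 + 2 * (j + 1))) := by
  unfold phi'
  rw [Finset.sum_range_succ _ (j + 1)]
  push_cast
  rfl

lemma phi'_succ_left (j : ℕ) (x : RatFunc ℚ) :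
    phi' (j + 1) x = 1 / (x * (x + 1)) + phi' j (x + 2) := by
  unfold phi'
  rw [Finset.sum_range_succ' _ (j + 1), add_comm]
  congr 1
  · simp
  · apply Finset.sum_congr rfl
    intro i _
    push_cast
    congr 2 <;> ring

lemma X_ne (n : ℕ) : (RatFunc.X : RatFunc ℚ) + (n : RatFunc ℚ) ≠ 0 := by
  have h : (RatFunc.X : RatFunc ℚ) + (n : RatFunc ℚ)
      = algebraMap (Polynomial ℚ) (RatFunc ℚ) (Polynomial.X + Polynomial.C (n : ℚ)) := by
    simp
  rw [h]
  exact RatFunc.algebraMap_ne_zero (Polynomial.X_add_C_ne_zero _)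

lemma c_ne (n : ℕ) : ((RatFunc.X : RatFunc ℚ) + 1) ^ 2 + (RatFunc.X + 2 * (n : RatFunc ℚ) + 3) ^ 2
        + 6 * (n : RatFunc ℚ) + 6 ≠ 0 := by
  have h : ((RatFunc.X : RatFunc ℚ) + 1) ^ 2 + (RatFunc.X + 2 * (n : RatFunc ℚ) + 3) ^ 2
        + 6 * (n : RatFunc ℚ) + 6
      = algebraMap (Polynomial ℚ) (RatFunc ℚ) ((Polynomial.X + 1) ^ 2 +
        (Polynomial.X + 2 * (n : Polynomial ℚ) + 3) ^ 2 + 6 * (n : Polynomial ℚ) + 6) := by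
    simp only [map_add, map_mul, map_pow, map_natCast, map_ofNat, map_one, RatFunc.algebraMap_X]
  rw [h]
  apply RatFunc.algebraMap_ne_zero
  intro h0
  have h1 := congrArg (Polynomial.eval 0) h0
  simp at h1
  have : (0 : ℚ) ≤ n := Nat.cast_nonneg n
  nlinarith

/-- The reflected sum. -/
lemma phi'_refl (j : ℕ) :
    phi' j (-RatFunc.X - 2 * (j : RatFunc ℚ) - 2)
      = 1 / RatFunc.X - 1 / (RatFunc.X + 2 * (j : RatFunc ℚ) + 2) - phi' j RatFunc.X := by
  have key : ∀ m : ℕ, ∑ i ∈ Finset.range m,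
      (1 / ((RatFunc.X + 2 * (i : RatFunc ℚ) + 1) * (RatFunc.X + 2 * (i : RatFunc ℚ) + 2)))
      = 1 / (RatFunc.X : RatFunc ℚ) - 1 / (RatFunc.X + 2 * (m : RatFunc ℚ))
        - ∑ i ∈ Finset.range m,
    1 / ((RatFunc.X + 2 * (i : RatFunc ℚ)) * (RatFunc.X + 1 + 2 * (i : RatFunc ℚ))) := by
    intro m
    induction m with
    | zero => simp
    | succ m ih =>
      rw [Finset.sum_range_succ, Finset.sum_range_succ, ih]
      have h0 : (RatFunc.X : RatFunc ℚ) + 2 * (m : RatFunc ℚ) ≠ 0 := by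
        have := X_ne (2 * m); push_cast at this; exact this
      have h1 : (RatFunc.X : RatFunc ℚ) + 2 * (m : RatFunc ℚ) + 1 ≠ 0 := by
        have := X_ne (2 * m + 1); push_cast at this; rwa [← add_assoc] at this
      have h2 : (RatFunc.X : RatFunc ℚ) + 2 * (m : RatFunc ℚ) + 2 ≠ 0 := by
        have := X_ne (2 * m + 2); push_cast at this; rwa [← add_assoc] at this
      have e1 : (RatFunc.X : RatFunc ℚ) + 1 + 2 * (m : RatFunc ℚ) = RatFunc.X + 2 * (m : RatFunc ℚ) + 1 := by ring
      have e2 : (RatFunc.X : RatFunc ℚ) + 2 * ((m + 1 : ℕ) : RatFunc ℚ)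
        = RatFunc.X + 2 * (m : RatFunc ℚ) + 2 := by push_cast; ring
      rw [e1, e2]
      have e : 1 / (((RatFunc.X : RatFunc ℚ) + 2 * (m : RatFunc ℚ) + 1) * (RatFunc.X + 2 * (m : RatFunc ℚ) + 2))
          = 1 / (RatFunc.X + 2 * (m : RatFunc ℚ)) - 1 / (RatFunc.X + 2 * (m : RatFunc ℚ) + 2)
            - 1 / ((RatFunc.X + 2 * (m : RatFunc ℚ)) * (RatFunc.X + 2 * (m : RatFunc ℚ) + 1)) := by
        generalize (RatFunc.X : RatFunc ℚ) + 2 * (m : RatFunc ℚ) = z at *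
        field_simp
        ring
      rw [e]
      ring
  have hk := key (j + 1)
  have e2 : (RatFunc.X : RatFunc ℚ) + 2 * ((j + 1 : ℕ) : RatFunc ℚ)
        = RatFunc.X + 2 * (j : RatFunc ℚ) + 2 := by push_cast; ring
  rw [e2] at hk
  unfold phi'
  rw [← hk, ← Finset.sum_range_reflect]
  apply Finset.sum_congr rfl
  intro i hi
  have hi' : i ≤ j := by simpa [Nat.lt_succ_iff] using hi
  have : ((j + 1 - 1 - i : ℕ) : RatFunc ℚ) = j - i := by
    simp [Nat.cast_sub hi']
  rw [this]
  congr 1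
  ring

/-- The algebraic core of the identity. -/
lemma core {K : Type*} [Field K] (x n S T c : K)
    (hc : c = (x + 1) ^ 2 + (x + 2 * (n + 2) + 3) ^ 2 + 6 * (n + 2) + 6)
    (hc0 : c ≠ 0) (hT : T ≠ 0) (h0 : x ≠ 0) (h1 : x + 1 ≠ 0) (h2 : x + 2 ≠ 0) (h3 : x + 3 ≠ 0)
    (h4 : x + 4 ≠ 0) (h6 : x + 2 * n + 6 ≠ 0) (h7 : x + 2 * n + 7 ≠ 0) :
    x * (1 / (x * (x + 1)) + (1 / ((x + 2) * (x + 3)) +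
        (S + 1 / ((x + 2 * n + 6) * (x + 2 * n + 7)))))
        / ((x + 1) * (x + 2) * (x + 3) * (x + 4) * T * (x + 2 * n + 6) * (x + 2 * n + 7))
      = ((1 + 4 / c) * (1 / (x + 2) ^ 2) + 1 / c) *
          ((x + 2) * (1 / ((x + 2) * (x + 3)) + (S + 1 / ((x + 2 * n + 6) * (x + 2 * n + 7))))
            / ((x + 3) * (x + 4) * T * (x + 2 * n + 6) * (x + 2 * n + 7)))
        - (1 / c) * (1 / (x + 4) ^ 2) *
          ((x + 4) * (S + 1 / ((x + 2 * n + 6) * (x + 2 * n + 7)))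
            / (T * (x + 2 * n + 6) * (x + 2 * n + 7)))
        + (1 / c) * (x * (1 / (x * (x + 1)) + (1 / ((x + 2) * (x + 3)) + S))
            / ((x + 1) * (x + 2) * (x + 3) * (x + 4) * T))
        - (1 / c) * (1 / (x + 2) ^ 2) * ((x + 2) * (1 / ((x + 2) * (x + 3)) + S)
            / ((x + 3) * (x + 4) * T))
        + (4 / c) * (1 / (x + 2 * n + 6) ^ 2) * ((-(x + 2 * n + 6)) *
            (1 / x - 1 / (x + 2 * n + 6) - (1 / (x * (x + 1)) + (1 / ((x + 2) * (x + 3)) + S)))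
            / (-((x + 1) * (x + 2) * (x + 3) * (x + 4) * T))) := by
  field_simp
  subst hc
  ring

/-- For `j ≥ 2`, with `c = (a+1)² + (a+2j+3)² + 6j + 6`,
`δ(j+1, a) = ((1 + 4/c)/(a+2)² + 1/c)·δ(j, a+2) − (1/c)(1/(a+4)²)·δ(j-1, a+4) + (1/c)·δ(j, a)
  − (1/c)(1/(a+2)²)·δ(j-1, a+2) + (4/c)(1/(a+2j+2)²)·δ(j, -a-2j-2)`,
as rational functions in `a`. -/
theorem stmt_14 (j : ℕ) (hj : 2 ≤ j) :
    let X : RatFunc ℚ := RatFunc.X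
    let c : RatFunc ℚ := (X + 1) ^ 2 + (X + 2 * (j : RatFunc ℚ) + 3) ^ 2
        + 6 * (j : RatFunc ℚ) + 6
    delta (j + 1) X
      = ((1 + 4 / c) * (1 / (X + 2) ^ 2) + 1 / c) * delta j (X + 2)
        - (1 / c) * (1 / (X + 4) ^ 2) * delta (j - 1) (X + 4)
        + (1 / c) * delta j X
        - (1 / c) * (1 / (X + 2) ^ 2) * delta (j - 1) (X + 2)
        + (4 / c) * (1 / (X + 2 * (j : RatFunc ℚ) + 2) ^ 2)
            * delta j (-X - 2 * (j : RatFunc ℚ) - 2) := by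
  intro X c
  obtain ⟨k, rfl⟩ : ∃ k, j = k + 2 := ⟨j - 2, by omega⟩
  have hX : ∀ n : ℕ, X + (n : RatFunc ℚ) ≠ 0 := X_ne
  have hc0 : c ≠ 0 := c_ne (k + 2)
  have hTne : prodP (2 * k + 1) (X + 4) ≠ 0 := by
    unfold prodP
    refine Finset.prod_ne_zero_iff.mpr fun i _ => ?_
    have := hX (4 + i)
    push_cast at this
    rwa [← add_assoc] at this
  have h6 : X + 2 * (k : RatFunc ℚ) + 6 ≠ 0 := by
    have := hX (2 * k + 6); push_cast at this; rwa [← add_assoc] at this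
  have h7 : X + 2 * (k : RatFunc ℚ) + 7 ≠ 0 := by
    have := hX (2 * k + 7); push_cast at this; rwa [← add_assoc] at this
  have a22 : X + 2 + 2 = X + 4 := by ring
  have hS3 : phi' (k + 1) (X + 4)
      = phi' k (X + 4) + 1 / ((X + 2 * k + 6) * (X + 2 * k + 7)) := by
    rw [phi'_succ]; congr 3 <;> ring
  have pj : phi' (k + 2) X
      = 1 / (X * (X + 1)) + (1 / ((X + 2) * (X + 3)) + phi' k (X + 4)) := by
    rw [phi'_succ_left, phi'_succ_left, a22]; congr 4; ring
  have pj2 : phi' (k + 2) (X + 2) = 1 / ((X + 2) * (X + 3)) +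
      (phi' k (X + 4) + 1 / ((X + 2 * k + 6) * (X + 2 * k + 7))) := by
    rw [phi'_succ_left, a22, hS3]; congr 3; ring
  have pj1 : phi' (k + 1) (X + 2) = 1 / ((X + 2) * (X + 3)) + phi' k (X + 4) := by
    rw [phi'_succ_left, a22]; congr 3; ring
  have pj3 : phi' (k + 2 + 1) X = 1 / (X * (X + 1)) + (1 / ((X + 2) * (X + 3)) +
      (phi' k (X + 4) + 1 / ((X + 2 * k + 6) * (X + 2 * k + 7)))) := by
    rw [phi'_succ_left, pj2]
  have q4 : prodP (2 * k + 3) (X + 4)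
      = prodP (2 * k + 1) (X + 4) * (X + 2 * k + 6) * (X + 2 * k + 7) := by
    rw [prodP_succ, prodP_succ]; push_cast; ring
  have ql : ∀ (m : ℕ) (x : RatFunc ℚ),
      prodP (m + 2) x = (x + 1) * (x + 2) * prodP m (x + 2) := by
    intro m x
    rw [prodP_succ_left, prodP_succ_left, add_assoc x 1 1, one_add_one_eq_two]; ring
  have q2a : prodP (2 * k + 3) (X + 2)
      = (X + 3) * (X + 4) * prodP (2 * k + 1) (X + 4) := by
    rw [ql, a22]; ring
  have q2b : prodP (2 * k + 5) (X + 2) = (X + 3) * (X + 4) * prodP (2 * k + 1) (X + 4)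
      * (X + 2 * k + 6) * (X + 2 * k + 7) := by
    rw [ql, a22, q4]; ring
  have q0a : prodP (2 * k + 5) X
      = (X + 1) * (X + 2) * (X + 3) * (X + 4) * prodP (2 * k + 1) (X + 4) := by
    rw [ql, q2a]; ring
  have q0b : prodP (2 * k + 7) X = (X + 1) * (X + 2) * (X + 3) * (X + 4)
      * prodP (2 * k + 1) (X + 4) * (X + 2 * k + 6) * (X + 2 * k + 7) := by
    rw [ql, q2b]; ring
  have ey : -X - 2 * ((k + 2 : ℕ) : RatFunc ℚ) - 2 = -(X + 2 * k + 6) := by push_cast; ring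
  have qy : prodP (2 * k + 5) (-(X + 2 * k + 6))
      = -((X + 1) * (X + 2) * (X + 3) * (X + 4) * prodP (2 * k + 1) (X + 4)) := by
    have h := prodP_refl (2 * k + 5) X
    have e : -X - ((2 * k + 5 : ℕ) : RatFunc ℚ) - 1 = -(X + 2 * k + 6) := by push_cast; ring
    have o : ((-1 : RatFunc ℚ)) ^ (2 * k + 5) = -1 := Odd.neg_one_pow ⟨k + 2, by ring⟩
    rw [e, o, q0a] at h
    rw [h]; ring
  have py : phi' (k + 2) (-(X + 2 * k + 6)) = 1 / X - 1 / (X + 2 * k + 6)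
      - (1 / (X * (X + 1)) + (1 / ((X + 2) * (X + 3)) + phi' k (X + 4))) := by
    have h := phi'_refl (k + 2)
    have e : (RatFunc.X : RatFunc ℚ) + 2 * ((k + 2 : ℕ) : RatFunc ℚ) + 2 = X + 2 * k + 6 := by
      push_cast; ring
    rw [e] at h
    rw [← ey, ← pj]
    exact h
  have ew : X + 2 * ((k + 2 : ℕ) : RatFunc ℚ) + 2 = X + 2 * k + 6 := by push_cast; ring
  have hd : ∀ (j : ℕ) (x : RatFunc ℚ), delta j x = x * phi' j x / prodP (2 * j + 1) x :=
    fun _ _ => rfl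
  have i1 : 2 * (k + 2 + 1) + 1 = 2 * k + 7 := by ring
  have i2 : 2 * (k + 2) + 1 = 2 * k + 5 := by ring
  have i3 : k + 2 - 1 = k + 1 := by omega
  have i4 : 2 * (k + 1) + 1 = 2 * k + 3 := by ring
  rw [ey, ew, i3]
  simp only [hd, i1, i2, i4]
  rw [pj3, pj2, hS3, pj, pj1, py, q0b, q2b, q4, q0a, q2a, qy]
  have hcc : c = (X + 1) ^ 2 + (X + 2 * ((k : RatFunc ℚ) + 2) + 3) ^ 2
      + 6 * ((k : RatFunc ℚ) + 2) + 6 := by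
    simp only [c]; push_cast; ring
  exact core X k _ _ c hcc hc0 hTne (by simpa using hX 0) (by simpa using hX 1)
    (by simpa using hX 2) (by simpa using hX 3) (by simpa using hX 4) h6 h7
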